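/- Fix partitions μ and ν and set d = |μ| + |ν|. For each integer k ≥ 0 define the remainder polynomial R_k ∈ ℚ[X] of λ_k = Φ(μ,ν,k) by R_k := Σ_{t=0}^{d} coeff_{k(k+1)/2 + 2t}(He_{λ_k}) · X^t (so that He_{λ_k}(X) = X^{k(k+1)/2} R_k(X²)). Then for every compact subset K of ℂ, the functions x ↦ R_k(2kx)/(2k)^d converge uniformly on K, as k → ∞, to the polynomial (x+1)^{|μ|} · (x−1)^{|ν|}. -/

import Mathlib

/-- A partition: a weakly decreasing list of positive integers. -/
def IsPartition (l : List ℕ) : Prop :=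
  l.Pairwise (· ≥ ·) ∧ ∀ x ∈ l, 0 < x

/-- The degree vector of a partition: `n_i = λ_i + ℓ(λ) − i` (here `i` is 0-indexed). -/
def degVec (l : List ℕ) (i : Fin l.length) : ℕ :=
  l.get i + (l.length - 1 - (i : ℕ))

/-- The Vandermonde determinant `Δ(n_λ) = ∏_{i<j} (n_j − n_i)` of the degree vector. -/
noncomputable def vanderQ (l : List ℕ) : ℚ :=
  ∏ i : Fin l.length, ∏ j : Fin l.length,
    if (i : ℕ) < (j : ℕ) then ((degVec l j : ℚ) - (degVec l i : ℚ)) else 1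

/-- The Wronskian Hermite polynomial `He_λ = Wr[He_{n_1},…,He_{n_ℓ}] / Δ(n_λ)`. -/
noncomputable def HeW (l : List ℕ) : Polynomial ℚ :=
  Polynomial.C (vanderQ l)⁻¹ *
    (Matrix.of fun i j : Fin l.length =>
      (⇑Polynomial.derivative)^[(i : ℕ)]
        ((Polynomial.hermite (degVec l j)).map (Int.castRingHom ℚ))).det

/-- The content sum `c(λ) = Σ_{(i,j)∈λ} (j − i)`. -/
def contentSum (l : List ℕ) : ℤ :=
  ∑ i : Fin l.length, ∑ j ∈ Finset.Icc 1 (l.get i), ((j : ℤ) - ((i : ℕ) + 1))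

/-- `Phi μ ν k` is the partition with 2-core `(k,k−1,…,2,1)` and 2-quotient `(μ,ν)`:
form the set `D` of `N = 2ℓ(μ) + 2ℓ(ν) + k` distinct naturals
`{2(a_i + ℓ(ν))} ∪ {2t : t < ℓ(ν)} ∪ {2(b_j + ℓ(μ) + k) + 1} ∪ {2t+1 : t < ℓ(μ)+k}`
(where `a`, `b` are the degree vectors of `μ`, `ν`), sort it decreasingly as
`d_1 > … > d_N`, and take the parts `d_i − (N − i)`, discarding zero parts. -/
def Phi (μ ν : List ℕ) (k : ℕ) : List ℕ :=
  let D : Finset ℕ :=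
    ((Finset.univ : Finset (Fin μ.length)).image fun i => 2 * (degVec μ i + ν.length)) ∪
    ((Finset.range ν.length).image fun t => 2 * t) ∪
    ((Finset.univ : Finset (Fin ν.length)).image fun j =>
        2 * (degVec ν j + μ.length + k) + 1) ∪
    ((Finset.range (μ.length + k)).image fun t => 2 * t + 1)
  let s := D.sort (· ≤ ·)
  (((List.range s.length).map fun t => s.getD t 0 - t).reverse).filter
    fun x => decide (0 < x)


/-- The remainder polynomial `R_k` of `λ_k = Φ(μ,ν,k)`:
`R_k = Σ_{t=0}^{|μ|+|ν|} coeff_{k(k+1)/2 + 2t}(He_{λ_k}) · X^t`,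
so that `He_{λ_k}(X) = X^{k(k+1)/2} R_k(X²)`. -/
noncomputable def remainderPoly (μ ν : List ℕ) (k : ℕ) : Polynomial ℚ :=
  ∑ t ∈ Finset.range (μ.sum + ν.sum + 1),
    Polynomial.C ((HeW (Phi μ ν k)).coeff (k * (k + 1) / 2 + 2 * t)) *
      Polynomial.X ^ t

namespace WH
open Polynomial

/-- Coefficients of the normalised one-variable entries. -/
noncomputable def qC (n i s : ℕ) : ℚ :=
  (n.descFactorial (i + 2 * s) : ℚ) * (-1 / 2) ^ s / (s.factorial : ℚ)

noncomputable def qP (n i : ℕ) : ℚ[X] :=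
  ∑ s ∈ Finset.range (n + 1), C (qC n i s) * X ^ s

lemma qC_eq_zero {n i s : ℕ} (h : n < i + 2 * s) : qC n i s = 0 := by
  simp [qC, Nat.descFactorial_eq_zero_iff_lt.mpr h]

lemma coeff_qP (n i s : ℕ) : (qP n i).coeff s = qC n i s := by
  simp only [qP, finsetSum_coeff, coeff_C_mul, coeff_X_pow]
  simp only [mul_ite, mul_one, mul_zero]
  rw [Finset.sum_ite_eq]
  split_ifs with h
  · rfl
  · rw [qC_eq_zero]
    simp at h; omega

lemma derivative_qP (n i : ℕ) :
    derivative (qP n i) = C (-1 / 2 * ((n : ℚ) * ((n : ℚ) - 1))) * qP (n - 2) i := by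
  ext s
  rw [coeff_derivative, coeff_qP, coeff_C_mul, coeff_qP]
  have hd : ((n.descFactorial (i + 2 * (s + 1)) : ℕ) : ℚ) =
      (n : ℚ) * ((n : ℚ) - 1) * ((n - 2).descFactorial (i + 2 * s) : ℕ) := by
    match n with
    | 0 => simp [show i + 2 * (s + 1) = (i + 2 * s + 1) + 1 by ring]
    | 1 => simp [show i + 2 * (s + 1) = (i + 2 * s + 1) + 1 by ring]
    | n + 2 =>
      rw [show i + 2 * (s + 1) = (i + 2 * s + 1) + 1 by ring, Nat.succ_descFactorial_succ,
        Nat.succ_descFactorial_succ]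
      push_cast
      ring
  rw [qC, qC, hd, Nat.factorial_succ]
  have : (s.factorial : ℚ) ≠ 0 := by positivity
  have : (s + 1 : ℚ) ≠ 0 := by positivity
  push_cast
  field_simp
  ring

lemma derivative_det {N : ℕ} (M : Matrix (Fin N) (Fin N) ℚ[X]) :
    derivative M.det = ∑ j, (M.updateCol j fun i => derivative (M i j)).det := by
  simp_rw [Matrix.det_apply']
  rw [derivative_sum, Finset.sum_comm]
  refine Finset.sum_congr rfl fun σ _ => ?_
  have h1 : ((Equiv.Perm.sign σ : ℤ) : ℚ[X]) = C ((Equiv.Perm.sign σ : ℤ) : ℚ) := by simp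
  rw [h1, derivative_C_mul, derivative_prod_finset, Finset.mul_sum]
  refine Finset.sum_congr rfl fun j _ => ?_
  congr 1
  rw [← Finset.mul_prod_erase Finset.univ _ (Finset.mem_univ j), mul_comm]
  congr 1
  · simp
  · refine Finset.prod_congr rfl fun i hi => ?_
    rw [Matrix.updateCol_ne (Finset.ne_of_mem_erase hi)]

/-- Vandermonde of natural numbers. -/
noncomputable def Del {N : ℕ} (f : Fin N → ℕ) : ℚ := (Matrix.vandermonde fun j => (f j : ℚ)).det

noncomputable def Gm {N : ℕ} (f : Fin N → ℕ) : Matrix (Fin N) (Fin N) ℚ[X] :=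
  Matrix.of fun i j => qP (f j) i

noncomputable def PF {N : ℕ} (f : Fin N → ℕ) : ℚ[X] := C (Del f)⁻¹ * (Gm f).det

lemma Del_ne_zero {N : ℕ} {f : Fin N → ℕ} (hf : Function.Injective f) : Del f ≠ 0 :=
  Matrix.det_vandermonde_ne_zero_iff.mpr (Nat.cast_injective.comp hf)

lemma Del_eq_zero {N : ℕ} {f : Fin N → ℕ} (hf : ¬ Function.Injective f) : Del f = 0 := by
  by_contra h
  exact hf (Function.Injective.of_comp (f := (Nat.cast : ℕ → ℚ))
    (Matrix.det_vandermonde_ne_zero_iff.mp h))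

lemma Gm_det {N : ℕ} (f : Fin N → ℕ) : (Gm f).det = C (Del f) * PF f := by
  by_cases hf : Function.Injective f
  · rw [PF, ← mul_assoc, ← C_mul, mul_inv_cancel₀ (Del_ne_zero hf), C_1, one_mul]
  · rw [Del_eq_zero hf]
    simp only [Function.Injective, not_forall] at hf
    obtain ⟨a, b, hab, hne⟩ := hf
    rw [Matrix.det_zero_of_column_eq hne]
    · simp
    · intro k; simp [Gm, hab]

lemma Del_perm {N : ℕ} (f : Fin N → ℕ) (σ : Equiv.Perm (Fin N)) :
    Del (f ∘ σ) = (Equiv.Perm.sign σ : ℤ) * Del f := by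
  unfold Del
  rw [← Matrix.det_permute]
  rfl

lemma Gm_perm {N : ℕ} (f : Fin N → ℕ) (σ : Equiv.Perm (Fin N)) :
    (Gm (f ∘ σ)).det = (Equiv.Perm.sign σ : ℤ) * (Gm f).det := by
  rw [← Matrix.det_permute']
  rfl

lemma PF_perm {N : ℕ} (f : Fin N → ℕ) (σ : Equiv.Perm (Fin N)) : PF (f ∘ σ) = PF f := by
  unfold PF
  rw [Del_perm, Gm_perm]
  rcases Int.units_eq_one_or (Equiv.Perm.sign σ) with h | h <;> simp [h]

lemma Del_succ {N : ℕ} (f : Fin (N + 1) → ℕ) :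
    Del f = (∏ i : Fin N, ((f i.succ : ℚ) - f 0)) * Del (f ∘ Fin.succ) := by
  unfold Del
  rw [Matrix.det_vandermonde, Matrix.det_vandermonde, Fin.prod_univ_succ]
  congr 1
  · rw [Fin.prod_Ioi_zero]
  · refine Finset.prod_congr rfl fun i _ => ?_
    rw [Fin.prod_Ioi_succ]; rfl

lemma Del_update {N : ℕ} (f : Fin N → ℕ) (j : Fin N) (y : ℕ) :
    Del (Function.update f j y) * ∏ i ∈ Finset.univ.erase j, ((f j : ℚ) - f i) =
      Del f * ∏ i ∈ Finset.univ.erase j, ((y : ℚ) - f i) := by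
  obtain _ | N := N
  · exact j.elim0
  have key : ∀ (f : Fin (N + 1) → ℕ), 
     Del (Function.update f 0 y) * ∏ i ∈ Finset.univ.erase 0, ((f 0 : ℚ) - f i) =
      Del f * ∏ i ∈ Finset.univ.erase 0, ((y : ℚ) - f i) := by
    intro f
    have hE : ∀ g : Fin (N+1) → ℚ, ∏ i ∈ Finset.univ.erase 0, g i = ∏ i : Fin N, g i.succ := by
      intro g
      have : (Finset.univ.erase (0 : Fin (N+1))) = Finset.univ.map ⟨Fin.succ, Fin.succ_injective N⟩ := by
        ext x
        refine Fin.cases ?_ (fun i => ?_) x <;> simp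
      rw [this, Finset.prod_map]; rfl
    rw [hE, hE, Del_succ, Del_succ f]
    have : Function.update f 0 y ∘ Fin.succ = f ∘ Fin.succ := by
      ext i; simp
    rw [this]
    simp only [Function.update_self, Function.update_of_ne (Fin.succ_ne_zero _)]
    have h1 : ∀ a : ℚ, ∏ i : Fin N, ((f i.succ : ℚ) - a) = (-1) ^ N * ∏ i : Fin N, (a - f i.succ) := by
      intro a
      have := Finset.prod_neg (s := (Finset.univ : Finset (Fin N))) (f := fun i => (a - (f i.succ : ℚ)))
      simpa using this
    rw [h1, h1 (f 0)]
    ring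
  have h := key (f ∘ Equiv.swap 0 j)
  have h2 : Function.update (f ∘ Equiv.swap 0 j) 0 y = Function.update f j y ∘ Equiv.swap 0 j := by
    ext i
    by_cases hi : i = 0
    · subst hi; simp
    · rw [Function.update_of_ne hi]
      simp only [Function.comp]
      rw [Function.update_of_ne]
      intro hh
      apply hi
      rw [Equiv.swap_apply_eq_iff] at hh
      simpa using hh
  have hE : ∀ g : Fin (N+1) → ℚ, ∏ i ∈ Finset.univ.erase 0, g (Equiv.swap 0 j i) = ∏ i ∈ Finset.univ.erase j, g i := by
    intro g
    refine Finset.prod_equiv (Equiv.swap 0 j) ?_ ?_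
    · intro i
      simp only [Finset.mem_erase, Finset.mem_univ, and_true, ne_eq, Equiv.swap_apply_eq_iff]
      simp
    · intros; rfl
  rw [h2, Del_perm, Del_perm] at h
  simp only [Function.comp, Equiv.swap_apply_left] at h
  rw [hE (fun i => (f j : ℚ) - f i), hE (fun i => (y : ℚ) - f i)] at h
  have hs : (((Equiv.Perm.sign (Equiv.swap 0 j) : ℤˣ) : ℤ) : ℚ) ≠ 0 := by
    exact_mod_cast Units.ne_zero _
  rw [mul_assoc, mul_assoc] at h
  exact mul_left_cancel₀ hs h

/-- Lagrange-type ratio. -/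
noncomputable def rho {ι : Type*} [Fintype ι] [DecidableEq ι] (n : ι → ℕ) (j : ι) (y : ℚ) : ℚ :=
  ∏ i, if i = j then 1 else (y - n i) / ((n j : ℚ) - n i)

lemma rho_eq {ι : Type*} [Fintype ι] [DecidableEq ι] (n : ι → ℕ) (j : ι) (y : ℚ) :
    rho n j y = (∏ i ∈ Finset.univ.erase j, (y - n i)) / ∏ i ∈ Finset.univ.erase j, ((n j : ℚ) - n i) := by
  rw [rho, ← Finset.mul_prod_erase Finset.univ _ (Finset.mem_univ j), if_pos rfl, one_mul,
    ← Finset.prod_div_distrib]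
  refine Finset.prod_congr rfl fun i hi => ?_
  rw [if_neg (Finset.ne_of_mem_erase hi)]

lemma Del_update' {N : ℕ} {f : Fin N → ℕ} (hf : Function.Injective f) (j : Fin N) (y : ℕ) :
    Del (Function.update f j y) = Del f * rho f j y := by
  rw [rho_eq, ← mul_div_assoc, ← Del_update, mul_div_cancel_right₀]
  rw [Finset.prod_ne_zero_iff]
  intro i hi
  rw [sub_ne_zero]
  intro h
  exact (Finset.ne_of_mem_erase hi) (hf (Nat.cast_injective h)).symm

lemma derivative_PF {N : ℕ} {f : Fin N → ℕ} (hf : Function.Injective f) :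
    derivative (PF f) = ∑ j, C (-1 / 2 * ((f j : ℚ) * ((f j : ℚ) - 1) * rho f j ((f j : ℚ) - 2))) *
      PF (Function.update f j (f j - 2)) := by
  conv_lhs => rw [PF, derivative_C_mul, derivative_det, Finset.mul_sum]
  refine Finset.sum_congr rfl fun j _ => ?_
  have h1 : (Gm f).updateCol j (fun i => derivative (Gm f i j)) =
      (Gm (Function.update f j (f j - 2))).updateCol j
        ((C (-1 / 2 * ((f j : ℚ) * ((f j : ℚ) - 1)))) •
          fun i => Gm (Function.update f j (f j - 2)) i j) := by
    ext1 i k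
    by_cases hk : k = j
    · subst hk
      simp only [Matrix.updateCol_self, Pi.smul_apply, smul_eq_mul, Gm, Matrix.of_apply,
        Function.update_self]
      exact derivative_qP _ _
    · rw [Matrix.updateCol_ne hk, Matrix.updateCol_ne hk]
      simp [Gm, Function.update_of_ne hk]
  rw [h1, Matrix.det_updateCol_smul]
  rw [Matrix.updateCol_eq_self, Gm_det,
    Del_update' hf]
  have hd := Del_ne_zero hf
  by_cases h2 : 2 ≤ f j
  · rw [← mul_assoc, ← mul_assoc, ← C_mul, ← C_mul]
    congr 2
    push_cast [h2]
    field_simp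
  · have : (f j : ℚ) * ((f j : ℚ) - 1) = 0 := by
      have : f j = 0 ∨ f j = 1 := by omega
      rcases this with h | h <;> simp [h]
    simp [this]

end WH

namespace WH
open Polynomial

lemma det_descFactorial {N : ℕ} (f : Fin N → ℕ) :
    (Matrix.of fun i j : Fin N => ((f j).descFactorial i : ℚ)).det = Del f := by
  rw [Del, Matrix.det_eval_matrixOfPolynomials_eq_det_vandermonde _ (fun i => descPochhammer ℚ i)
    (fun i => descPochhammer_natDegree ℚ i) (fun i => monic_descPochhammer ℚ i), ← Matrix.det_transpose]
  congr 1
  ext i j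
  simp [descPochhammer_eval_eq_descFactorial]

lemma PF_coeff_zero {N : ℕ} {f : Fin N → ℕ} (hf : Function.Injective f) : (PF f).coeff 0 = 1 := by
  rw [PF, coeff_C_mul]
  have : (Gm f).det.coeff 0 = Del f := by
    rw [← det_descFactorial, coeff_zero_eq_eval_zero, ← coe_evalRingHom, RingHom.map_det]
    congr 1
    ext i j
    simp only [RingHom.mapMatrix_apply, Matrix.map_apply, Gm, Matrix.of_apply, coe_evalRingHom]
    rw [← coeff_zero_eq_eval_zero, coeff_qP]
    simp [qC]
  rw [this, inv_mul_cancel₀ (Del_ne_zero hf)]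

lemma PF_cons {N : ℕ} (f : Fin N → ℕ) :
    PF (Fin.cons 0 (fun i => f i + 1) : Fin (N + 1) → ℕ) = PF f := by
  have h1 : Del (Fin.cons 0 (fun i => f i + 1) : Fin (N + 1) → ℕ) =
      (∏ i, ((f i : ℚ) + 1)) * Del f := by
    rw [Del_succ]
    congr 1
    · simp
    · unfold Del
      rw [← Matrix.det_vandermonde_add (fun j => (f j : ℚ)) 1]
      congr 2
      ext j
      simp
  have h0 : ∀ i : ℕ, qP 0 (i + 1) = 0 := by
    intro i
    ext s
    rw [coeff_qP, qC_eq_zero (by omega)]; simp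
  have h00 : qP 0 0 = 1 := by simp [qP, qC]
  have hq : ∀ n i : ℕ, qP (n + 1) (i + 1) = C ((n : ℚ) + 1) * qP n i := by
    intro n i
    ext s
    rw [coeff_C_mul, coeff_qP, coeff_qP, qC, qC, show i + 1 + 2 * s = (i + 2 * s) + 1 by ring,
      Nat.succ_descFactorial_succ]
    push_cast; ring
  have h2 : (Gm (Fin.cons 0 (fun i => f i + 1) : Fin (N + 1) → ℕ)).det =
      (∏ i, C ((f i : ℚ) + 1)) * (Gm f).det := by
    rw [Matrix.det_succ_column_zero, Fin.sum_univ_succ]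
    rw [Finset.sum_eq_zero]
    · rw [← Matrix.det_mul_row]
      simp only [Gm, Matrix.of_apply, Fin.cons_zero, Fin.val_zero, h00, pow_zero, one_mul, add_zero]
      congr 1
      ext1 i j
      simp [hq]
    · intro i _
      simp [Gm, h0]
  rw [PF, PF, h1, h2, ← map_prod, ← mul_assoc, ← C_mul]
  congr 2
  have : (∏ i, ((f i : ℚ) + 1)) ≠ 0 := by
    rw [Finset.prod_ne_zero_iff]; intros; positivity
  rw [mul_inv]
  field_simp

lemma Del_weight {N : ℕ} (f : Fin N → ℕ) :
    ∑ j, (f j : ℚ) * Del (Function.update f j (f j - 1)) =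
      ((∑ j, (f j : ℚ)) - ∑ i : Fin N, ((i : ℕ) : ℚ)) * Del f := by
  let H : (Fin N → ℕ) → Matrix (Fin N) (Fin N) ℚ[X] := fun f =>
    Matrix.of fun i j => C ((f j).descFactorial i : ℚ) * X ^ (f j - i)
  have hH : ∀ f, X ^ (∑ i : Fin N, (i : ℕ)) * (H f).det = X ^ (∑ j, f j) * C (Del f) := by
    intro f
    rw [← Finset.prod_pow_eq_pow_sum, ← Finset.prod_pow_eq_pow_sum, ← Matrix.det_mul_column,
      ← det_descFactorial, RingHom.map_det, ← Matrix.det_mul_row]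
    congr 1
    ext1 i j
    simp only [H, Matrix.of_apply, RingHom.mapMatrix_apply, Matrix.map_apply]
    by_cases h : (i : ℕ) ≤ f j
    · rw [mul_left_comm, ← pow_add, Nat.add_sub_cancel' h, mul_comm]
    · rw [Nat.descFactorial_eq_zero_iff_lt.mpr (not_le.mp h)]; simp
  have hev : ∀ f, (H f).det.eval 1 = Del f := by
    intro f
    have := congrArg (eval 1) (hH f)
    simpa using this
  have hder : derivative (H f).det = ∑ j, C (f j : ℚ) * (H (Function.update f j (f j - 1))).det := by
    rw [derivative_det]
    refine Finset.sum_congr rfl fun j _ => ?_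
    have h1 : (H f).updateCol j (fun i => derivative (H f i j)) =
      (H (Function.update f j (f j - 1))).updateCol j
        (C (f j : ℚ) • fun i => H (Function.update f j (f j - 1)) i j) := by
      ext1 i k
      by_cases hk : k = j
      · subst hk
        simp only [Matrix.updateCol_self, Pi.smul_apply, smul_eq_mul, H, Matrix.of_apply,
          Function.update_self]
        rw [derivative_C_mul, derivative_X_pow, ← mul_assoc, ← mul_assoc, ← C_mul, ← C_mul]
        rcases Nat.eq_zero_or_pos (f k) with h0 | h0
        · simp [h0]
        · obtain ⟨m, hm⟩ := Nat.exists_eq_add_of_le' h0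
          rw [hm, Nat.add_sub_cancel, show m + 1 - (i : ℕ) - 1 = m - i by omega]
          congr 2
          have := Nat.succ_descFactorial_succ m i
          rw [Nat.descFactorial_succ, mul_comm] at this
          exact_mod_cast this
      · rw [Matrix.updateCol_ne hk, Matrix.updateCol_ne hk]
        simp [H, Function.update_of_ne hk]
    rw [h1, Matrix.det_updateCol_smul, Matrix.updateCol_eq_self]
  have h3 := congrArg (fun p => eval 1 (derivative p)) (hH f)
  simp only [derivative_mul, derivative_X_pow, derivative_C, hder, eval_add, eval_mul, eval_pow,
    eval_X, one_pow, eval_C, hev, eval_finsetSum] at h3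
  simp at h3
  linarith

lemma rho_weight_fin {N : ℕ} {f : Fin N → ℕ} (hf : Function.Injective f) :
    ∑ j, (f j : ℚ) * rho f j ((f j : ℚ) - 1) =
      (∑ j, (f j : ℚ)) - ∑ i : Fin N, ((i : ℕ) : ℚ) := by
  have h := Del_weight f
  have hd := Del_ne_zero hf
  rw [← mul_left_inj' hd, ← h, Finset.sum_mul]
  refine Finset.sum_congr rfl fun j _ => ?_
  rw [Del_update' hf]
  rcases Nat.eq_zero_or_pos (f j) with h0 | h0
  · simp [h0]
  · push_cast [h0]; ring

lemma sum_fin_cast (N : ℕ) : ∑ i : Fin N, ((i : ℕ) : ℚ) = (N : ℚ) * (N - 1) / 2 := by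
  induction N with
  | zero => simp
  | succ n ih => rw [Fin.sum_univ_castSucc]; simp [ih]; ring

section generic
variable {ι : Type*} [Fintype ι] [DecidableEq ι]

lemma rho_comp {κ : Type*} [Fintype κ] [DecidableEq κ] (e : κ ≃ ι) (n : ι → ℕ) (j : κ) (y : ℚ) :
    rho (n ∘ e) j y = rho n (e j) y := by
  unfold rho
  refine Fintype.prod_equiv e _ _ fun i => ?_
  simp

lemma rho_weight {n : ι → ℕ} (hn : Function.Injective n) :
    ∑ j, (n j : ℚ) * rho n j ((n j : ℚ) - 1) =
      (∑ j, (n j : ℚ)) - (Fintype.card ι : ℚ) * (Fintype.card ι - 1) / 2 := by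
  have h := rho_weight_fin (f := n ∘ (Fintype.equivFin ι).symm) (hn.comp (Equiv.injective _))
  rw [sum_fin_cast] at h
  simp only [rho_comp] at h
  simp only [Function.comp] at h
  rw [Equiv.sum_comp (Fintype.equivFin ι).symm (fun j => (n j : ℚ)),
    Equiv.sum_comp (Fintype.equivFin ι).symm (fun j => (n j : ℚ) * rho n j ((n j : ℚ) - 1))] at h
  exact h

noncomputable def PP (n : ι → ℕ) : ℚ[X] := PF (n ∘ (Fintype.equivFin ι).symm)

lemma PP_eq {N : ℕ} (e : Fin N ≃ ι) (n : ι → ℕ) : PP n = PF (n ∘ e) := by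
  have : N = Fintype.card ι := by simpa using Fintype.card_congr e
  subst this
  rw [PP, ← PF_perm (n ∘ e) ((Fintype.equivFin ι).symm.trans e.symm)]
  congr 1
  ext i
  simp

lemma PP_coeff_zero {n : ι → ℕ} (hn : Function.Injective n) : (PP n).coeff 0 = 1 :=
  PF_coeff_zero (hn.comp (Equiv.injective _))

noncomputable def rr (n : ι → ℕ) (j : ι) : ℚ :=
  (n j : ℚ) * ((n j : ℚ) - 1) * rho n j ((n j : ℚ) - 2)

lemma PP_derivative {n : ι → ℕ} (hn : Function.Injective n) :
    derivative (PP n) = ∑ j, C (-1 / 2 * rr n j) * PP (Function.update n j (n j - 2)) := by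
  rw [PP, derivative_PF (hn.comp (Equiv.injective _))]
  rw [← Equiv.sum_comp (Fintype.equivFin ι).symm]
  refine Finset.sum_congr rfl fun j _ => ?_
  rw [rho_comp, PP, rr]
  congr 2
  ext i
  simp only [Function.comp]
  by_cases h : i = j
  · subst h; simp
  · have h' : (Fintype.equivFin ι).symm i ≠ (Fintype.equivFin ι).symm j := by simpa using h
    rw [Function.update_of_ne h, Function.update_of_ne h']
    rfl

lemma PP_coeff_succ {n : ι → ℕ} (hn : Function.Injective n) (s : ℕ) :
    ((s : ℚ) + 1) * (PP n).coeff (s + 1) =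
      ∑ j, (-1 / 2 * rr n j) * (PP (Function.update n j (n j - 2))).coeff s := by
  have := congrArg (fun p => coeff p s) (PP_derivative hn)
  simp only [coeff_derivative, finsetSum_coeff, coeff_C_mul] at this
  rw [← this]; ring

end generic

end WH

namespace WH
open Polynomial

lemma two_mul_factorial (s : ℕ) :
    ((2 * s).factorial : ℚ) = 2 ^ s * s.factorial * (Nat.doubleFactorial (2 * s - 1) : ℕ) := by
  induction s with
  | zero => simp
  | succ s ih =>
    rw [show 2 * (s + 1) = 2 * s + 1 + 1 by ring, Nat.factorial_succ, Nat.factorial_succ,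
      Nat.factorial_succ]
    have : Nat.doubleFactorial (2 * s + 1 + 1 - 1) = (2 * s + 1) * Nat.doubleFactorial (2 * s - 1) := by
      cases s with
      | zero => rfl
      | succ t =>
        rw [show 2 * (t + 1) + 1 + 1 - 1 = (2 * t + 1) + 2 by omega, Nat.doubleFactorial_add_two,
          show 2 * (t + 1) - 1 = 2 * t + 1 by omega]
        congr 1
    rw [this]
    push_cast
    rw [ih]
    ring

lemma qC_zero_eq (m s : ℕ) :
    qC (2 * s + m) 0 s = (((hermite (2 * s + m)).coeff m : ℤ) : ℚ) := by
  rw [coeff_hermite_explicit, qC, zero_add, Nat.descFactorial_eq_factorial_mul_choose]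
  have h : (2 * s + m).choose m = (2 * s + m).choose (2 * s) := (Nat.choose_symm_add).symm
  rw [h]
  push_cast
  rw [two_mul_factorial]
  have : (s.factorial : ℚ) ≠ 0 := by positivity
  field_simp
  rw [mul_right_comm, ← mul_pow]
  norm_num
  ring

lemma hermite_map (n : ℕ) : (hermite n).map (Int.castRingHom ℚ) =
    ∑ s ∈ Finset.range (n + 1), C (qC n 0 s) * X ^ (n - 2 * s) := by
  ext m
  simp only [coeff_map, finsetSum_coeff, coeff_C_mul, coeff_X_pow, eq_intCast]
  by_cases h : ∃ s, n = 2 * s + m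
  · obtain ⟨s, hs⟩ := h
    rw [Finset.sum_eq_single s]
    · rw [if_pos (by omega), mul_one]
      subst hs
      rw [qC_zero_eq]
    · intro b _ hb
      by_cases hbn : n < 2 * b
      · rw [qC_eq_zero (by omega), zero_mul]
      · rw [if_neg (by omega), mul_zero]
    · intro h; simp at h; omega
  · rw [Finset.sum_eq_zero]
    · by_cases hmn : n < m
      · rw [coeff_hermite_of_lt hmn]; simp
      · rw [coeff_hermite_of_odd_add]; · simp
        rw [← Nat.not_even_iff_odd]
        rintro ⟨r, hr⟩
        exact h ⟨r - m, by omega⟩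
    · intro b _
      by_cases hbn : n < 2 * b
      · rw [qC_eq_zero (by omega), zero_mul]
      · rw [if_neg, mul_zero]
        intro hh
        exact h ⟨b, by omega⟩

lemma hermite_entry (n i : ℕ) (x : ℚ) (hx : x ≠ 0) :
    x ^ i * eval x ((⇑derivative)^[i] ((hermite n).map (Int.castRingHom ℚ))) =
      x ^ n * eval (x⁻¹ ^ 2) (qP n i) := by
  rw [hermite_map, iterate_derivative_sum, eval_finsetSum, qP, eval_finsetSum, Finset.mul_sum,
    Finset.mul_sum]
  refine Finset.sum_congr rfl fun s _ => ?_
  rw [iterate_derivative_C_mul, iterate_derivative_X_pow_eq_C_mul]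
  simp only [eval_mul, eval_C, eval_pow, eval_X]
  by_cases h : i + 2 * s ≤ n
  · have h1 : qC n i s = qC n 0 s * ((n - 2 * s).descFactorial i : ℕ) := by
      have := Nat.descFactorial_mul_descFactorial (k := 2 * s) (m := i + 2 * s) (n := n) (by omega)
      rw [Nat.add_sub_cancel] at this
      rw [qC, qC, ← this, zero_add]
      push_cast
      ring
    rw [h1]
    obtain ⟨r, rfl⟩ := Nat.exists_eq_add_of_le h
    rw [show i + 2 * s + r - 2 * s - i = r by omega]
    have : x ^ (i + 2 * s + r) * (x⁻¹ ^ 2) ^ s = x ^ i * x ^ r := by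
      rw [← pow_mul, inv_pow]
      field_simp
      ring
    calc _ = (x ^ i * x ^ r) * (qC (i + 2 * s + r) 0 s * ((i + 2 * s + r - 2 * s).descFactorial i : ℕ)) := by ring
      _ = _ := by rw [← this]; ring
  · rw [qC_eq_zero (n := n) (i := i) (s := s) (by omega), zero_mul, mul_zero]
    by_cases h2 : 2 * s ≤ n
    · rw [Nat.descFactorial_eq_zero_iff_lt.mpr (by omega)]; simp
    · rw [qC_eq_zero (by omega)]; simp

/-- The Wronskian normalised. -/
noncomputable def Wn {N : ℕ} (f : Fin N → ℕ) : ℚ[X] :=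
  C (Del f)⁻¹ * (Matrix.of fun i j : Fin N =>
      (⇑derivative)^[(i : ℕ)] ((hermite (f j)).map (Int.castRingHom ℚ))).det

lemma Wn_eval {N : ℕ} (f : Fin N → ℕ) (x : ℚ) (hx : x ≠ 0) :
    x ^ (∑ i : Fin N, (i : ℕ)) * eval x (Wn f) = x ^ (∑ j, f j) * eval (x⁻¹ ^ 2) (PF f) := by
  rw [Wn, PF, eval_mul, eval_mul, eval_C, eval_C, mul_left_comm, mul_left_comm (x ^ (∑ j, f j))]
  congr 1
  rw [← coe_evalRingHom, ← coe_evalRingHom, RingHom.map_det, RingHom.map_det,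
    ← Finset.prod_pow_eq_pow_sum, ← Finset.prod_pow_eq_pow_sum, ← Matrix.det_mul_column,
    ← Matrix.det_mul_row]
  congr 1
  ext i j
  simp only [Matrix.of_apply, RingHom.mapMatrix_apply, Matrix.map_apply, coe_evalRingHom, Gm]
  exact hermite_entry _ _ _ hx

lemma Wn_coeff {N : ℕ} (f : Fin N → ℕ) (m s : ℕ)
    (h : ∑ j, f j = (∑ i : Fin N, (i : ℕ)) + m + 2 * s) : (Wn f).coeff m = (PF f).coeff s := by
  set A := ∑ j, f j with hA
  set B := ∑ i : Fin N, (i : ℕ) with hB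
  set S := (PF f).natDegree + s with hS
  have key : X ^ (B + 2 * S) * Wn f =
      ∑ r ∈ Finset.range (S + 1), C ((PF f).coeff r) * X ^ (A + 2 * (S - r)) := by
    apply Polynomial.eq_of_infinite_eval_eq
    refine Set.Infinite.mono (s := {x : ℚ | x ≠ 0}) ?_ ?_
    · intro x hx
      have hx : x ≠ 0 := hx
      have h1 := Wn_eval f x hx
      simp only [Set.mem_ofPred_eq, eval_mul, eval_pow, eval_X, eval_finsetSum, eval_C]
      rw [pow_add, mul_right_comm, h1, eval_eq_sum_range' (n := S + 1) (by omega), Finset.mul_sum,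
        Finset.sum_mul]
      refine Finset.sum_congr rfl fun r hr => ?_
      have hr : r ≤ S := by simpa [Nat.lt_succ_iff] using hr
      obtain ⟨u, hu⟩ := Nat.exists_eq_add_of_le hr
      rw [hu, Nat.add_sub_cancel_left, ← pow_mul, inv_pow, mul_add, pow_add, pow_add]
      field_simp
      rw [← hA, mul_comm]
    · exact (Set.finite_singleton (0 : ℚ)).infinite_compl
  have h2 := congrArg (fun p => coeff p (m + (B + 2 * S))) key
  simp only [coeff_X_pow_mul, finsetSum_coeff, coeff_C_mul, coeff_X_pow] at h2
  rw [h2, Finset.sum_eq_single s]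
  · rw [if_pos (by omega), mul_one]
  · intro r hr hrs
    have hr : r ≤ S := by simpa [Nat.lt_succ_iff] using hr
    rw [if_neg (by omega), mul_zero]
  · intro hh; simp at hh; omega

lemma HeW_eq (l : List ℕ) : HeW l = Wn (degVec l) := by
  have : vanderQ l = Del (degVec l) := by
    rw [vanderQ, Del, Matrix.det_vandermonde]
    refine Finset.prod_congr rfl fun i _ => ?_
    rw [← Finset.prod_filter]
    refine Finset.prod_congr ?_ fun _ _ => rfl
    ext j; simp
  rw [HeW, Wn, this]

end WH

namespace WH
open Polynomial Filter Topology

lemma tendsto_ratio (a b : ℚ) :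
    Tendsto (fun k : ℕ => (a + 2 * (k : ℚ)) / (b + 2 * (k : ℚ))) atTop (𝓝 1) := by
  have h2 : Tendsto (fun k : ℕ => b + 2 * (k : ℚ)) atTop atTop := by
    apply tendsto_atTop_add_const_left
    exact Tendsto.const_mul_atTop (by norm_num) tendsto_natCast_atTop_atTop
  have h3 : Tendsto (fun k : ℕ => 1 + (a - b) / (b + 2 * (k : ℚ))) atTop (𝓝 (1 + 0)) :=
    tendsto_const_nhds.add (h2.const_div_atTop _)
  rw [add_zero] at h3
  refine h3.congr' ?_
  filter_upwards [h2.eventually_gt_atTop 0] with k hk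
  field_simp
  ring

section fam
variable {ι κ : Type*} [Fintype ι] [DecidableEq ι] [Fintype κ] [DecidableEq κ]

/-- The family of degree vectors. -/
def nk (α : ι → ℕ) (β : κ → ℕ) (c k : ℕ) : ι ⊕ (κ ⊕ Fin (c + k)) → ℕ :=
  Sum.elim (fun i => 2 * α i)
    (Sum.elim (fun j => 2 * (β j + c + k) + 1) (fun t => 2 * (t : ℕ) + 1))

lemma nk_injective {α : ι → ℕ} {β : κ → ℕ} (hα : Function.Injective α) (hβ : Function.Injective β)
    (c k : ℕ) : Function.Injective (nk α β c k) := by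
  rintro (i | i | i) (j | j | j) h <;> simp only [nk, Sum.elim_inl, Sum.elim_inr] at h
  · rw [hα (show α i = α j by omega)]
  · omega
  · omega
  · omega
  · rw [hβ (show β i = β j by omega)]
  · have := j.2; omega
  · omega
  · have := i.2; omega
  · rw [Fin.ext (show (i : ℕ) = j by omega)]

lemma rho_two_mul (α : ι → ℕ) (j : ι) :
    (∏ i, if i = j then (1 : ℚ) else
      (2 * (α j : ℚ) - 2 - 2 * (α i : ℚ)) / (2 * (α j : ℚ) - 2 * (α i : ℚ))) =
      rho α j ((α j : ℚ) - 1) := by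
  unfold rho
  refine Finset.prod_congr rfl fun i _ => ?_
  split_ifs
  · rfl
  · rw [← mul_div_mul_left (_ - _) ((α j : ℚ) - α i) (two_ne_zero)]
    congr 1 <;> ring

lemma prod_tele (f : ℕ → ℚ) (M : ℕ) (h : ∀ t < M, f t ≠ 0) (h0 : f 0 ≠ 0) :
    ∏ t : Fin M, f ((t : ℕ) + 1) / f t = f M / f 0 := by
  induction M with
  | zero => simp [h0]
  | succ M ih =>
    rw [Fin.prod_univ_castSucc]
    simp only [Fin.val_castSucc, Fin.val_last]
    rw [ih fun t ht => h t (by omega)]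
    have := h M (by omega)
    field_simp

noncomputable def E1 (α : ι → ℕ) (β : κ → ℕ) (c : ℕ) (j : ι) (k : ℕ) : ℚ :=
  (∏ i, ((2 * (β i + c : ℚ) + 3 - 2 * α j) + 2 * k) / ((2 * (β i + c : ℚ) + 1 - 2 * α j) + 2 * k)) *
    ((2 * (c : ℚ) + 1 - 2 * α j) + 2 * k)

noncomputable def E2 (α : ι → ℕ) (β : κ → ℕ) (c : ℕ) (j : κ) (k : ℕ) : ℚ :=
  (∏ i, ((2 * (β j + c : ℚ) - 1 - 2 * α i) + 2 * k) / ((2 * (β j + c : ℚ) + 1 - 2 * α i) + 2 * k)) *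
    ((2 * (β j + c : ℚ) + 1) + 2 * k)

lemma E1_tendsto (α : ι → ℕ) (β : κ → ℕ) (c : ℕ) (j : ι) :
    Tendsto (fun k : ℕ => E1 α β c j k / (2 * (k : ℚ))) atTop (𝓝 1) := by
  have h := (tendsto_finsetProd (Finset.univ : Finset κ) (fun i _ =>
    tendsto_ratio (2 * (β i + c : ℚ) + 3 - 2 * α j) (2 * (β i + c : ℚ) + 1 - 2 * α j))).mul
    (tendsto_ratio (2 * (c : ℚ) + 1 - 2 * α j) 0)
  simp only [Finset.prod_const_one, mul_one, zero_add] at h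
  refine h.congr fun k => ?_
  rw [E1, mul_div_assoc]

lemma E2_tendsto (α : ι → ℕ) (β : κ → ℕ) (c : ℕ) (j : κ) :
    Tendsto (fun k : ℕ => E2 α β c j k / (2 * (k : ℚ))) atTop (𝓝 1) := by
  have h := (tendsto_finsetProd (Finset.univ : Finset ι) (fun i _ =>
    tendsto_ratio (2 * (β j + c : ℚ) - 1 - 2 * α i) (2 * (β j + c : ℚ) + 1 - 2 * α i))).mul
    (tendsto_ratio (2 * (β j + c : ℚ) + 1) 0)
  simp only [Finset.prod_const_one, mul_one, zero_add] at h
  refine h.congr fun k => ?_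
  rw [E2, mul_div_assoc]

lemma odd_ne (a b : ℕ) : (2 * (a : ℚ) - (2 * (b : ℚ) + 1)) ≠ 0 := by
  rw [sub_ne_zero]
  intro h
  have : 2 * a = 2 * b + 1 := by exact_mod_cast h
  omega

lemma rr_inl (α : ι → ℕ) (β : κ → ℕ) (c k : ℕ) (j : ι) :
    rr (nk α β c k) (Sum.inl j) = -2 * (α j * rho α j ((α j : ℚ) - 1)) * E1 α β c j k := by
  rw [rr, rho, Fintype.prod_sum_type, Fintype.prod_sum_type]
  simp only [nk, Sum.elim_inl, Sum.elim_inr, Sum.inl.injEq, reduceCtorEq, if_false]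
  push_cast
  rw [rho_two_mul]
  have h1 : (∏ t : Fin (c + k), (2 * (α j : ℚ) - 2 - (2 * ((t : ℕ) : ℚ) + 1)) /
      (2 * (α j : ℚ) - (2 * ((t : ℕ) : ℚ) + 1))) =
      (2 * (α j : ℚ) - (2 * ((c + k : ℕ) : ℚ) + 1)) / (2 * (α j : ℚ) - 1) := by
    have := prod_tele (fun t => 2 * (α j : ℚ) - (2 * (t : ℚ) + 1)) (c + k)
      (fun t _ => odd_ne _ _) (odd_ne _ _)
    simp only [Nat.cast_zero, mul_zero, zero_add] at this
    rw [← this]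
    refine Finset.prod_congr rfl fun t _ => ?_
    push_cast
    congr 1
    ring
  have h2 : (∏ i, (2 * (α j : ℚ) - 2 - (2 * ((β i : ℚ) + c + k) + 1)) /
      (2 * (α j : ℚ) - (2 * ((β i : ℚ) + c + k) + 1))) =
      ∏ i, ((2 * (β i + c : ℚ) + 3 - 2 * α j) + 2 * k) / ((2 * (β i + c : ℚ) + 1 - 2 * α j) + 2 * k) := by
    refine Finset.prod_congr rfl fun i _ => ?_
    rw [← neg_div_neg_eq]
    congr 1 <;> ring
  rw [h1, h2, E1]
  have h3 : (2 * (α j : ℚ) - 1) ≠ 0 := by simpa using odd_ne (α j) 0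
  push_cast
  field_simp
  ring

lemma rr_inr_inl (α : ι → ℕ) (β : κ → ℕ) (c k : ℕ) (hk : 0 < k) (j : κ) :
    rr (nk α β c k) (Sum.inr (Sum.inl j)) =
      2 * (β j * rho β j ((β j : ℚ) - 1)) * E2 α β c j k := by
  rw [rr, rho, Fintype.prod_sum_type, Fintype.prod_sum_type]
  simp only [nk, Sum.elim_inl, Sum.elim_inr, Sum.inl.injEq, Sum.inr.injEq, reduceCtorEq, if_false]
  push_cast
  rw [← rho_two_mul]
  have h1 : (∏ t : Fin (c + k), (2 * ((β j : ℚ) + c + k) + 1 - 2 - (2 * ((t : ℕ) : ℚ) + 1)) /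
      (2 * ((β j : ℚ) + c + k) + 1 - (2 * ((t : ℕ) : ℚ) + 1))) =
      (β j : ℚ) / ((β j : ℚ) + c + k) := by
    have := prod_tele (fun t => 2 * ((β j : ℚ) + c + k) - 2 * (t : ℚ)) (c + k)
      (fun t ht => by
        have : ((t : ℕ) : ℚ) < ((c + k : ℕ) : ℚ) := by exact_mod_cast ht
        push_cast at this
        have h0 : (0 : ℚ) ≤ β j := by positivity
        apply ne_of_gt
        linarith) (by
        have : (0 : ℚ) < k := by exact_mod_cast hk
        push_cast
        have h0 : (0 : ℚ) ≤ β j := by positivity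
        have h0 : (0 : ℚ) ≤ c := by positivity
        apply ne_of_gt
        linarith)
    rw [show (β j : ℚ) / ((β j : ℚ) + c + k) = (2 * ((β j : ℚ) + c + k) - 2 * ((c + k : ℕ) : ℚ)) /
      (2 * ((β j : ℚ) + c + k) - 2 * ((0 : ℕ) : ℚ)) by
        rw [← mul_div_mul_left (β j : ℚ) _ (two_ne_zero)]
        push_cast
        congr 1 <;> ring]
    rw [← this]
    refine Finset.prod_congr rfl fun t _ => ?_
    push_cast
    congr 1 <;> ring
  have h2 : (∏ i, (2 * ((β j : ℚ) + c + k) + 1 - 2 - 2 * (α i : ℚ)) /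
      (2 * ((β j : ℚ) + c + k) + 1 - 2 * (α i : ℚ))) =
      ∏ i, ((2 * (β j + c : ℚ) - 1 - 2 * α i) + 2 * k) / ((2 * (β j + c : ℚ) + 1 - 2 * α i) + 2 * k) := by
    refine Finset.prod_congr rfl fun i _ => ?_
    congr 1 <;> ring
  have h4 : (∏ i, if i = j then (1 : ℚ) else (2 * ((β j : ℚ) + c + k) + 1 - 2 - (2 * ((β i : ℚ) + c + k) + 1)) /
      (2 * ((β j : ℚ) + c + k) + 1 - (2 * ((β i : ℚ) + c + k) + 1))) =
      (∏ i, if i = j then (1 : ℚ) else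
      (2 * (β j : ℚ) - 2 - 2 * (β i : ℚ)) / (2 * (β j : ℚ) - 2 * (β i : ℚ))) := by
    refine Finset.prod_congr rfl fun i _ => ?_
    split_ifs
    · rfl
    · congr 1 <;> ring
  rw [h1, h2, h4, E2]
  have h3 : ((β j : ℚ) + c + k) ≠ 0 := by
    have : (0 : ℚ) < k := by exact_mod_cast hk
    positivity
  field_simp
  ring

lemma rho_eq_zero {n : ι → ℕ} {j i : ι} {y : ℚ} (hij : i ≠ j) (h : (n i : ℚ) = y) : rho n j y = 0 := by
  rw [rho, Finset.prod_eq_zero (Finset.mem_univ i)]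
  rw [if_neg hij, h, sub_self, zero_div]

lemma rr_inr_inr (α : ι → ℕ) (β : κ → ℕ) (c k : ℕ) (t : Fin (c + k)) :
    rr (nk α β c k) (Sum.inr (Sum.inr t)) = 0 := by
  rw [rr]
  obtain ⟨t, ht⟩ := t
  cases t with
  | zero => simp [nk]
  | succ t =>
    rw [rho_eq_zero (i := Sum.inr (Sum.inr ⟨t, by omega⟩)), mul_zero]
    · simp
    · simp [nk]; ring

/-- Limit coefficients. -/
noncomputable def Lim : ℕ → ℚ → ℚ → ℚ
  | 0, _, _ => 1
  | s + 1, a, b => (a * Lim s (a - 1) b - b * Lim s a (b - 1)) / (s + 1)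

noncomputable def wt (α : ι → ℕ) : ℚ :=
  (∑ j, (α j : ℚ)) - (Fintype.card ι : ℚ) * (Fintype.card ι - 1) / 2

lemma wt_update (α : ι → ℕ) (j : ι) (h : 0 < α j) : wt (Function.update α j (α j - 1)) = wt α - 1 := by
  unfold wt
  rw [← Finset.add_sum_erase _ _ (Finset.mem_univ j),
    ← Finset.add_sum_erase (f := fun j => (α j : ℚ)) _ (Finset.mem_univ j)]
  rw [Finset.sum_congr (g := fun j => (α j : ℚ)) rfl (fun i hi => by
    rw [Function.update_of_ne (Finset.ne_of_mem_erase hi)])]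
  rw [Function.update_self]
  push_cast [h]
  ring

lemma injective_update {α : ι → ℕ} (hα : Function.Injective α) (j : ι) (y : ℕ)
    (h : ∀ i, i ≠ j → α i ≠ y) : Function.Injective (Function.update α j y) := by
  intro a b hab
  by_cases ha : a = j <;> by_cases hb : b = j
  · rw [ha, hb]
  · subst ha; rw [Function.update_self, Function.update_of_ne hb] at hab
    exact absurd hab.symm (h b hb)
  · subst hb; rw [Function.update_self, Function.update_of_ne ha] at hab
    exact absurd hab (h a ha)
  · rw [Function.update_of_ne ha, Function.update_of_ne hb] at hab
    exact hα hab

lemma good_of_ne {α : ι → ℕ} (hα : Function.Injective α) (j : ι)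
    (h : (α j : ℚ) * rho α j ((α j : ℚ) - 1) ≠ 0) :
    0 < α j ∧ Function.Injective (Function.update α j (α j - 1)) := by
  have h0 : 0 < α j := by
    rcases Nat.eq_zero_or_pos (α j) with h0 | h0
    · simp [h0] at h
    · exact h0
  refine ⟨h0, injective_update hα j _ fun i hij hi => h ?_⟩
  rw [rho_eq_zero hij, mul_zero]
  rw [hi]; push_cast [h0]; rfl

lemma update_inl (α : ι → ℕ) (β : κ → ℕ) (c k : ℕ) (j : ι) :
    Function.update (nk α β c k) (Sum.inl j) (nk α β c k (Sum.inl j) - 2) =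
      nk (Function.update α j (α j - 1)) β c k := by
  ext x
  rcases x with i | i
  · by_cases hi : i = j
    · subst hi; simp [nk]; omega
    · rw [Function.update_of_ne (by simpa using hi)]
      simp [nk, Function.update_of_ne hi]
  · rw [Function.update_of_ne (by simp)]
    simp [nk]

lemma update_inr (α : ι → ℕ) (β : κ → ℕ) (c k : ℕ) (j : κ) (h : 0 < β j) :
    Function.update (nk α β c k) (Sum.inr (Sum.inl j)) (nk α β c k (Sum.inr (Sum.inl j)) - 2) =
      nk α (Function.update β j (β j - 1)) c k := by
  ext x
  rcases x with i | i | i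
  · rw [Function.update_of_ne (by simp)]
    simp [nk]
  · by_cases hi : i = j
    · subst hi; simp [nk]; omega
    · rw [Function.update_of_ne (by simpa using hi)]
      simp [nk, Function.update_of_ne hi]
  · rw [Function.update_of_ne (by simp)]
    simp [nk]

theorem main_limit (c s : ℕ) : ∀ (α : ι → ℕ) (β : κ → ℕ), Function.Injective α →
    Function.Injective β →
    Tendsto (fun k : ℕ => (PP (nk α β c k)).coeff s / (2 * (k : ℚ)) ^ s) atTop
      (𝓝 (Lim s (wt α) (wt β))) := by
  induction s with
  | zero =>
    intro α β hα hβ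
    simp only [PP_coeff_zero (nk_injective hα hβ c _), pow_zero, div_one, Lim]
    exact tendsto_const_nhds
  | succ s ih =>
    intro α β hα hβ
    have hA : ∀ j : ι, Tendsto (fun k : ℕ => (-1 / 2 * rr (nk α β c k) (Sum.inl j)) *
        (PP (Function.update (nk α β c k) (Sum.inl j) (nk α β c k (Sum.inl j) - 2))).coeff s /
          (2 * (k : ℚ)) ^ (s + 1)) atTop
        (𝓝 (α j * rho α j ((α j : ℚ) - 1) * Lim s (wt α - 1) (wt β))) := by
      intro j
      simp only [rr_inl, update_inl]
      by_cases h : (α j : ℚ) * rho α j ((α j : ℚ) - 1) = 0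
      · simp [h]
      · obtain ⟨h0, hinj⟩ := good_of_ne hα j h
        have h1 := ((E1_tendsto α β c j).mul (ih _ β hinj hβ)).const_mul
          ((α j : ℚ) * rho α j ((α j : ℚ) - 1))
        rw [one_mul, wt_update α j h0] at h1
        refine h1.congr fun k => ?_
        rw [pow_succ, div_mul_div_comm, ← mul_div_assoc]
        congr 1 <;> ring
    have hB : ∀ j : κ, Tendsto (fun k : ℕ => (-1 / 2 * rr (nk α β c k) (Sum.inr (Sum.inl j))) *
        (PP (Function.update (nk α β c k) (Sum.inr (Sum.inl j))
          (nk α β c k (Sum.inr (Sum.inl j)) - 2))).coeff s /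
          (2 * (k : ℚ)) ^ (s + 1)) atTop
        (𝓝 (-(β j * rho β j ((β j : ℚ) - 1)) * Lim s (wt α) (wt β - 1))) := by
      intro j
      by_cases h : (β j : ℚ) * rho β j ((β j : ℚ) - 1) = 0
      · refine Tendsto.congr' (f₁ := fun _ => (0 : ℚ)) ?_ (by simp [h])
        filter_upwards [eventually_gt_atTop 0] with k hk
        rw [rr_inr_inl _ _ _ _ hk, h]
        simp
      · obtain ⟨h0, hinj⟩ := good_of_ne hβ j h
        have h1 := ((E2_tendsto α β c j).mul (ih α _ hα hinj)).const_mul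
          (-((β j : ℚ) * rho β j ((β j : ℚ) - 1)))
        rw [one_mul, wt_update β j h0] at h1
        refine h1.congr' ?_
        filter_upwards [eventually_gt_atTop 0] with k hk
        rw [rr_inr_inl _ _ _ _ hk, update_inr _ _ _ _ _ h0]
        rw [pow_succ, div_mul_div_comm, ← mul_div_assoc]
        congr 1 <;> ring
    have hS := ((tendsto_finsetSum Finset.univ (fun j _ => hA j)).add
      (tendsto_finsetSum Finset.univ (fun j _ => hB j))).div_const ((s : ℚ) + 1)
    rw [← Finset.sum_mul, ← Finset.sum_mul, Finset.sum_neg_distrib, rho_weight hα, rho_weight hβ] at hS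
    have hL : Lim (s + 1) (wt α) (wt β) = (wt α * Lim s (wt α - 1) (wt β) +
      -wt β * Lim s (wt α) (wt β - 1)) / ((s : ℚ) + 1) := by
      rw [Lim]; ring
    rw [hL]
    refine hS.congr fun k => ?_
    have h1 := PP_coeff_succ (nk_injective hα hβ c k) s
    rw [Fintype.sum_sum_type, Fintype.sum_sum_type] at h1
    simp only [rr_inr_inr, mul_zero, zero_mul, Finset.sum_const_zero, add_zero] at h1
    rw [← Finset.sum_div, ← Finset.sum_div, ← add_div, ← h1]
    have : (s : ℚ) + 1 ≠ 0 := by positivity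
    field_simp

end fam

lemma Lim_eq (s : ℕ) : ∀ m n : ℕ,
    Lim s m n = ((1 + X : ℚ[X]) ^ m * (1 - X) ^ n).coeff s := by
  induction s with
  | zero =>
    intro m n
    simp [Lim, coeff_zero_eq_eval_zero]
  | succ s ih =>
    intro m n
    have hd : derivative ((1 + X : ℚ[X]) ^ m * (1 - X) ^ n) =
      C (m : ℚ) * ((1 + X) ^ (m - 1) * (1 - X) ^ n) - C (n : ℚ) * ((1 + X) ^ m * (1 - X) ^ (n - 1)) := by
      simp only [derivative_mul, derivative_pow, derivative_add, derivative_sub, derivative_one, derivative_X]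
      ring
    have h := congrArg (fun p => coeff p s) hd
    simp only [coeff_derivative, coeff_sub, coeff_C_mul, ← ih] at h
    have hm : (m : ℚ) * Lim s (m - 1) n = m * Lim s ((m - 1 : ℕ) : ℚ) n := by
      cases m <;> simp
    have hn : (n : ℚ) * Lim s m (n - 1) = n * Lim s m ((n - 1 : ℕ) : ℚ) := by
      cases n <;> simp
    have : (s : ℚ) + 1 ≠ 0 := by positivity
    rw [Lim, hm, hn, ← h]
    field_simp

end WH

namespace WH
open Polynomial Filter Topology

section
variable {ι κ : Type*} [Fintype ι] [Fintype κ]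

lemma PP_comp (e : κ ≃ ι) (n : ι → ℕ) : PP (n ∘ e) = PP n := by
  classical
  rw [PP_eq ((Fintype.equivFin κ).symm.trans e) n, PP]
  rfl

lemma wt_comp (e : κ ≃ ι) (n : ι → ℕ) : wt (n ∘ e) = wt n := by
  unfold wt
  rw [Fintype.card_congr e, ← Equiv.sum_comp e]
  rfl

lemma exists_equiv {f : κ → ℕ} {g : ι → ℕ} (hf : Function.Injective f) (hg : Function.Injective g)
    (h : Set.range f = Set.range g) : ∃ e : κ ≃ ι, f = g ∘ e := by
  refine ⟨(Equiv.ofInjective f hf).trans ((Equiv.setCongr h).trans (Equiv.ofInjective g hg).symm), ?_⟩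
  ext x
  simp only [Function.comp, Equiv.trans_apply]
  rw [Equiv.apply_ofInjective_symm hg]
  rfl
end

lemma PF_eq_PP {N : ℕ} (f : Fin N → ℕ) : PF f = PP f := (PP_eq (Equiv.refl _) f).symm

/-- The list transformation in `Phi`. -/
def strip (s : List ℕ) : List ℕ :=
  (((List.range s.length).map fun t => s.getD t 0 - t).reverse).filter fun x => decide (0 < x)

lemma strip_cons (s : List ℕ) : strip (0 :: s.map (· + 1)) = strip s := by
  unfold strip
  rw [List.length_cons, List.range_succ_eq_map, List.map_cons, List.reverse_cons, List.filter_append]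
  simp only [List.getD_cons_zero, Nat.sub_zero, List.map_map]
  have : (List.map ((fun t => (0 :: s.map (· + 1)).getD t 0 - t) ∘ Nat.succ)
      (List.range (s.map (· + 1)).length)) =
      (List.range s.length).map fun t => s.getD t 0 - t := by
    rw [List.length_map]
    refine List.map_congr_left fun t ht => ?_
    have ht : t < s.length := List.mem_range.mp ht
    simp [List.getD_eq_getElem?_getD, ht]
  rw [this]
  simp

lemma get_ge (s : List ℕ) (hs : s.Pairwise (· < ·)) (h0 : ∀ x ∈ s, 0 < x) (t : ℕ) (ht : t < s.length) :
    t + 1 ≤ s[t] := by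
  induction t with
  | zero => exact h0 _ (List.getElem_mem ht)
  | succ t ih =>
    have h1 := ih (by omega)
    have h2 : s[t] < s[t+1] := List.pairwise_iff_getElem.mp hs t (t+1) _ ht (by omega)
    omega

lemma strip_pos (s : List ℕ) (hs : s.Pairwise (· < ·)) (h0 : ∀ x ∈ s, 0 < x) :
    strip s = ((List.range s.length).map fun t => s.getD t 0 - t).reverse := by
  unfold strip
  rw [List.filter_eq_self]
  intro a ha
  rw [List.mem_reverse, List.mem_map] at ha
  obtain ⟨t, ht, rfl⟩ := ha
  have ht : t < s.length := List.mem_range.mp ht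
  have := get_ge s hs h0 t ht
  simp [List.getD_eq_getElem?_getD, ht]
  omega

lemma strip_main (N : ℕ) : ∀ s : List ℕ, s.length = N → s.Pairwise (· < ·) →
    PF (degVec (strip s)) = PP s.get ∧ wt (degVec (strip s)) = wt s.get := by
  induction N with
  | zero =>
    intro s hs _
    rw [List.length_eq_zero_iff] at hs
    subst hs
    have hl : (strip []).length = ([] : List ℕ).length := by simp [strip]
    have hf : degVec (strip []) = ([] : List ℕ).get ∘ finCongr hl := by
      funext i
      exact (finCongr hl i).elim0
    rw [PF_eq_PP, hf, PP_comp, wt_comp]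
    exact ⟨rfl, rfl⟩
  | succ N ih =>
    intro s hN hs
    by_cases h0 : ∀ x ∈ s, 0 < x
    · have hl : (strip s).length = s.length := by rw [strip_pos s hs h0]; simp
      have hf : degVec (strip s) = s.get ∘ ((finCongr hl).trans Fin.revPerm) := by
        ext ⟨i, hi⟩
        have hi' : i < s.length := by omega
        have h1 := get_ge s hs h0 (s.length - 1 - i) (by omega)
        have h2 : (strip s)[i] = s[s.length - 1 - i] - (s.length - 1 - i) := by
          simp only [strip_pos s hs h0]
          rw [List.getElem_reverse]
          simp [List.getD_eq_getElem?_getD]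
          rw [List.getElem?_eq_getElem (by omega)]
          simp
        simp only [degVec, List.get_eq_getElem, h2, Function.comp]
        simp [Fin.rev, Fin.revPerm, hl]
        have h3 : s.length - (i + 1) = s.length - 1 - i := by omega
        simp only [h3]
        omega
      rw [PF_eq_PP, hf, PP_comp, wt_comp]
      exact ⟨rfl, rfl⟩
    · push Not at h0
      obtain ⟨x, hx, hx0⟩ := h0
      have hx0 : x = 0 := by omega
      subst hx0
      obtain _ | ⟨a, s'⟩ := s
      · simp at hx
      rw [List.pairwise_cons] at hs
      have ha : a = 0 := by
        rcases List.mem_cons.mp hx with h | h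
        · exact h.symm
        · have := hs.1 _ h; omega
      subst ha
      obtain ⟨s'', rfl⟩ : ∃ s'' : List ℕ, s' = s''.map (· + 1) := by
        refine ⟨s'.map (· - 1), ?_⟩
        rw [List.map_map]
        conv_lhs => rw [← List.map_id s']
        refine List.map_congr_left fun y hy => ?_
        have := hs.1 y hy
        simp; omega
      have hs'' : s''.Pairwise (· < ·) := by
        have := hs.2
        rw [List.pairwise_map] at this
        simpa using this
      have hlen : s''.length = N := by simpa using hN
      obtain ⟨h1, h2⟩ := ih s'' hlen hs''
      rw [strip_cons, h1, h2]
      have hl : (0 :: s''.map (· + 1)).length = s''.length + 1 := by simp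
      have hf : (0 :: s''.map (· + 1)).get =
          (Fin.cons 0 (fun i => s''.get i + 1) : Fin (s''.length + 1) → ℕ) ∘ finCongr hl := by
        ext ⟨i, hi⟩
        cases i with
        | zero => rfl
        | succ i =>
          simp only [Function.comp, List.get_eq_getElem, finCongr_apply, Fin.cast_mk]
          have : (⟨i + 1, by omega⟩ : Fin (s''.length + 1)) = Fin.succ ⟨i, by omega⟩ := rfl
          rw [this, Fin.cons_succ]
          simp
      rw [hf, PP_comp, wt_comp, ← PF_eq_PP, ← PF_eq_PP, PF_cons]
      refine ⟨rfl, ?_⟩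
      unfold wt
      rw [Fin.sum_univ_succ]
      simp [Finset.sum_add_distrib]
      ring

lemma wt_degVec (l : List ℕ) : wt (degVec l) = l.sum := by
  unfold wt degVec
  have h1 : ∀ i : Fin l.length, ((l.get i + (l.length - 1 - (i : ℕ)) : ℕ) : ℚ) =
      l.get i + (((Fin.rev i : Fin l.length) : ℕ) : ℚ) := by
    intro i
    rw [Fin.val_rev]; push_cast
    congr 2
    omega
  simp only [h1]
  have h2 := Equiv.sum_comp Fin.revPerm (fun i : Fin l.length => ((i : ℕ) : ℚ))
  simp only [Fin.revPerm_apply] at h2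
  rw [Finset.sum_add_distrib, h2, sum_fin_cast, Fintype.card_fin, ← Nat.cast_sum]
  rw [add_sub_cancel_right]
  congr 1
  simp [← List.sum_ofFn]

lemma degVec_lt {l : List ℕ} (h : IsPartition l) {i j : Fin l.length} (hij : i < j) :
    degVec l j < degVec l i := by
  have := List.pairwise_iff_get.mp h.1 i j hij
  unfold degVec
  have := j.2
  have : (i : ℕ) < j := hij
  omega

lemma degVec_injective {l : List ℕ} (h : IsPartition l) : Function.Injective (degVec l) := by
  intro i j hij
  rcases lt_trichotomy i j with h1 | h1 | h1
  · have := degVec_lt h h1; omega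
  · exact h1
  · have := degVec_lt h h1; omega

/-- the even half -/
def alp (μ ν : List ℕ) : Fin μ.length ⊕ Fin ν.length → ℕ :=
  Sum.elim (fun i => degVec μ i + ν.length) (fun t => (t : ℕ))

lemma alp_injective {μ : List ℕ} (hμ : IsPartition μ) (ν : List ℕ) : Function.Injective (alp μ ν) := by
  rintro (i | i) (j | j) h <;> simp only [alp, Sum.elim_inl, Sum.elim_inr] at h
  · rw [degVec_injective hμ (show degVec μ i = degVec μ j by omega)]
  · have := j.2; omega
  · have := i.2; omega
  · rw [Fin.ext h]

lemma wt_alp (μ ν : List ℕ) : wt (alp μ ν) = μ.sum := by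
  rw [← wt_degVec]
  unfold wt alp
  rw [Fintype.sum_sum_type]
  simp only [Sum.elim_inl, Sum.elim_inr, Fintype.card_sum, Fintype.card_fin]
  rw [sum_fin_cast]
  push_cast
  rw [Finset.sum_add_distrib]
  simp
  ring

lemma sum_nk {ι κ : Type*} [Fintype ι] [Fintype κ] (α : ι → ℕ) (β : κ → ℕ) (c k : ℕ) :
    ∑ x, (nk α β c k x : ℚ) = 2 * (∑ i, (α i : ℚ)) + 2 * (∑ j, (β j : ℚ)) +
      Fintype.card κ * (2 * (c + k) + 1) + (c + k) ^ 2 := by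
  unfold nk
  rw [Fintype.sum_sum_type, Fintype.sum_sum_type]
  simp only [Sum.elim_inl, Sum.elim_inr]
  push_cast
  simp only [Finset.sum_add_distrib, ← Finset.mul_sum]
  rw [sum_fin_cast]
  simp
  ring

lemma wt_nk (μ ν : List ℕ) (k : ℕ) : wt (nk (alp μ ν) (degVec ν) μ.length k) =
    (k : ℚ) * (k + 1) / 2 + 2 * (μ.sum + ν.sum) := by
  rw [← wt_alp μ ν, ← wt_degVec ν]
  unfold wt
  rw [sum_nk]
  simp only [Fintype.card_sum, Fintype.card_fin]
  push_cast
  ring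

/-- The set in `Phi`. -/
def DD (μ ν : List ℕ) (k : ℕ) : Finset ℕ :=
    ((Finset.univ : Finset (Fin μ.length)).image fun i => 2 * (degVec μ i + ν.length)) ∪
    ((Finset.range ν.length).image fun t => 2 * t) ∪
    ((Finset.univ : Finset (Fin ν.length)).image fun j =>
        2 * (degVec ν j + μ.length + k) + 1) ∪
    ((Finset.range (μ.length + k)).image fun t => 2 * t + 1)

lemma Phi_eq (μ ν : List ℕ) (k : ℕ) : Phi μ ν k = strip ((DD μ ν k).sort (· ≤ ·)) := rfl

lemma range_nk (μ ν : List ℕ) (k : ℕ) :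
    Set.range (nk (alp μ ν) (degVec ν) μ.length k) = (DD μ ν k : Set ℕ) := by
  ext x
  simp only [nk, alp, DD, Set.Sum.elim_range, Finset.coe_union, Finset.coe_image, Set.mem_union,
    Set.mem_range, Sum.exists, Sum.elim_inl, Sum.elim_inr, Finset.coe_univ, Set.mem_image,
    Set.mem_univ, true_and, Finset.coe_range, Set.mem_Iio, Fin.exists_iff, exists_prop, or_assoc]

lemma Phi_spec {μ ν : List ℕ} (hμ : IsPartition μ) (hν : IsPartition ν) (k : ℕ) :
    PF (degVec (Phi μ ν k)) = PP (nk (alp μ ν) (degVec ν) μ.length k) ∧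
    wt (degVec (Phi μ ν k)) = wt (nk (alp μ ν) (degVec ν) μ.length k) := by
  set s := (DD μ ν k).sort (· ≤ ·) with hs
  have hsort : s.Pairwise (· < ·) := by
    exact ((DD μ ν k).sortedLT_sort).pairwise
  obtain ⟨h1, h2⟩ := strip_main _ s rfl hsort
  have hinj : Function.Injective s.get := List.nodup_iff_injective_get.mp (Finset.sort_nodup _ _)
  obtain ⟨e, he⟩ := exists_equiv hinj
    (nk_injective (alp_injective hμ ν) (degVec_injective hν) μ.length k) (by
      rw [range_nk, Set.range_list_get]
      ext x
      simp [hs])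
  rw [Phi_eq, h1, h2, he, PP_comp, wt_comp]
  exact ⟨rfl, rfl⟩

lemma HeW_coeff {μ ν : List ℕ} (hμ : IsPartition μ) (hν : IsPartition ν) (k t s : ℕ)
    (hts : t + s = μ.sum + ν.sum) :
    (HeW (Phi μ ν k)).coeff (k * (k + 1) / 2 + 2 * t) =
      (PP (nk (alp μ ν) (degVec ν) μ.length k)).coeff s := by
  obtain ⟨h1, h2⟩ := Phi_spec hμ hν k
  rw [HeW_eq, ← h1]
  apply Wn_coeff
  rw [wt_nk, wt, Fintype.card_fin, ← sum_fin_cast] at h2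
  obtain ⟨T, hT⟩ := (Nat.even_mul_succ_self k).two_dvd
  rw [hT, Nat.mul_div_cancel_left _ (by norm_num)]
  have hT' : (k : ℚ) * (k + 1) = 2 * T := by exact_mod_cast hT
  have hts' : (t : ℚ) + s = μ.sum + ν.sum := by exact_mod_cast hts
  rw [hT', ← hts'] at h2
  have : ((∑ j, degVec (Phi μ ν k) j : ℕ) : ℚ) =
    ((∑ i : Fin (Phi μ ν k).length, (i : ℕ)) + (T + 2 * t) + 2 * s : ℕ) := by
    push_cast
    linarith
  exact_mod_cast this

end WH

namespace WH
open Polynomial Filter Topology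

lemma tendstoUniformlyOn_poly (n : ℕ) (a : ℕ → ℕ → ℂ) (b : ℕ → ℂ)
    (h : ∀ t ∈ Finset.range n, Tendsto (fun k => a k t) atTop (𝓝 (b t))) (K : Set ℂ)
    (hK : IsCompact K) :
    TendstoUniformlyOn (fun k x => ∑ t ∈ Finset.range n, a k t * x ^ t)
      (fun x => ∑ t ∈ Finset.range n, b t * x ^ t) atTop K := by
  obtain ⟨B, hB⟩ := hK.isBounded.exists_norm_le
  have h1 : Tendsto (fun k => ∑ t ∈ Finset.range n, ‖a k t - b t‖ * B ^ t) atTop (𝓝 0) := by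
    have : Tendsto (fun k => ∑ t ∈ Finset.range n, ‖a k t - b t‖ * B ^ t) atTop
        (𝓝 (∑ t ∈ Finset.range n, 0 * B ^ t)) := by
      refine tendsto_finsetSum _ fun t ht => ?_
      refine Tendsto.mul_const _ ?_
      have := ((h t ht).sub_const (b t)).norm
      simpa using this
    simpa using this
  rw [Metric.tendstoUniformlyOn_iff]
  intro ε hε
  filter_upwards [h1.eventually (gt_mem_nhds hε)] with k hk x hx
  refine lt_of_le_of_lt ?_ hk
  rw [dist_comm, dist_eq_norm, ← Finset.sum_sub_distrib]
  refine (norm_sum_le _ _).trans (Finset.sum_le_sum fun t _ => ?_)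
  rw [← sub_mul, norm_mul, norm_pow]
  gcongr
  exact hB x hx

lemma limit_poly (m n : ℕ) :
    ∑ t ∈ Finset.range (m + n + 1), C (Lim (m + n - t) m n) * X ^ t =
      (X + 1 : ℚ[X]) ^ m * (X - 1) ^ n := by
  apply Polynomial.eq_of_infinite_eval_eq
  refine Set.Infinite.mono (s := {x : ℚ | x ≠ 0}) ?_ ((Set.finite_singleton (0 : ℚ)).infinite_compl)
  intro x hx
  have hx : x ≠ 0 := hx
  have hdeg : ((1 + X : ℚ[X]) ^ m * (1 - X) ^ n).natDegree < m + n + 1 := by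
    have : ((1 + X : ℚ[X]) ^ m * (1 - X) ^ n).natDegree ≤ m * 1 + n * 1 := by
      refine natDegree_mul_le_of_le (natDegree_pow_le_of_le _ ?_) (natDegree_pow_le_of_le _ ?_)
      · compute_degree
      · compute_degree
    omega
  have h1 := eval_eq_sum_range' hdeg x⁻¹
  simp only [Set.mem_ofPred_eq, eval_finsetSum, eval_mul, eval_C, eval_pow, eval_X, eval_add,
    eval_sub, eval_one, Lim_eq] at h1 ⊢
  have h2 : (x + 1) ^ m * (x - 1) ^ n = x ^ (m + n) * ((1 + x⁻¹) ^ m * (1 - x⁻¹) ^ n) := by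
    rw [pow_add, mul_mul_mul_comm, ← mul_pow, ← mul_pow, mul_add, mul_sub, mul_inv_cancel₀ hx, mul_one]
  rw [h2, h1, ← Finset.sum_range_reflect, Finset.mul_sum]
  refine Finset.sum_congr rfl fun t ht => ?_
  have ht : t ≤ m + n := by simpa [Nat.lt_succ_iff] using ht
  rw [show m + n + 1 - 1 - t = m + n - t by omega, show m + n - (m + n - t) = t by omega]
  rw [mul_left_comm]
  congr 1
  obtain ⟨u, hu⟩ := Nat.exists_eq_add_of_le ht
  rw [hu, Nat.add_sub_cancel_left, pow_add, inv_pow]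
  field_simp

end WH

/-- Asymptotics of the remainder polynomial for a fixed 2-quotient `(μ,ν)`:
`R_k(2kx)/(2k)^{|μ|+|ν|} → (x+1)^{|μ|} (x−1)^{|ν|}` as `k → ∞`,
uniformly on compact subsets of the complex plane. -/
theorem remainderPoly_tendstoUniformlyOn (μ ν : List ℕ)
    (hμ : IsPartition μ) (hν : IsPartition ν)
    (K : Set ℂ) (hK : IsCompact K) :
    TendstoUniformlyOn
      (fun (k : ℕ) (x : ℂ) =>
        ((remainderPoly μ ν k).map (algebraMap ℚ ℂ)).eval (2 * (k : ℂ) * x) /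
          (2 * (k : ℂ)) ^ (μ.sum + ν.sum))
      (fun x => (x + 1) ^ μ.sum * (x - 1) ^ ν.sum)
      Filter.atTop K := by
  classical
  set d := μ.sum + ν.sum with hd
  let cf : ℕ → ℕ → ℚ := fun k t =>
    (WH.PP (WH.nk (WH.alp μ ν) (degVec ν) μ.length k)).coeff (d - t) / (2 * (k : ℚ)) ^ (d - t)
  have hlim : ∀ t ∈ Finset.range (d + 1), Filter.Tendsto (fun k => ((cf k t : ℚ) : ℂ)) Filter.atTop
      (nhds ((WH.Lim (d - t) μ.sum ν.sum : ℚ) : ℂ)) := by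
    intro t _
    have h := WH.main_limit μ.length (d - t) (WH.alp μ ν) (degVec ν) (WH.alp_injective hμ ν)
      (WH.degVec_injective hν)
    rw [WH.wt_alp, WH.wt_degVec] at h
    have hc : Continuous (fun q : ℚ => ((q : ℝ) : ℂ)) :=
      Complex.continuous_ofReal.comp Rat.continuous_coe_real
    have := (hc.tendsto _).comp h
    simpa [Function.comp_def, cf] using this
  have hU := WH.tendstoUniformlyOn_poly (d + 1) (fun k t => ((cf k t : ℚ) : ℂ)) _ hlim K hK
  have hR : ∀ x : ℂ, ∑ t ∈ Finset.range (d + 1), ((WH.Lim (d - t) μ.sum ν.sum : ℚ) : ℂ) * x ^ t =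
      (x + 1) ^ μ.sum * (x - 1) ^ ν.sum := by
    intro x
    have h := congrArg (Polynomial.eval₂ (algebraMap ℚ ℂ) x) (WH.limit_poly μ.sum ν.sum)
    simpa [Polynomial.eval₂_finsetSum, Polynomial.eval₂_mul, Polynomial.eval₂_pow] using h
  simp only [hR] at hU
  refine hU.congr ?_
  filter_upwards [Filter.eventually_gt_atTop 0] with k hk x _
  have hk2 : (2 * (k : ℂ)) ≠ 0 := by
    have : (k : ℂ) ≠ 0 := by exact_mod_cast hk.ne'
    simpa using this
  simp only [remainderPoly, Polynomial.eval_map, Polynomial.eval₂_finsetSum, Polynomial.eval₂_mul,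
    Polynomial.eval₂_C, Polynomial.eval₂_pow, Polynomial.eval₂_X, ← hd]
  rw [Finset.sum_div]
  refine Finset.sum_congr rfl fun t ht => ?_
  have ht : t ≤ d := by simpa [Nat.lt_succ_iff] using ht
  rw [WH.HeW_coeff hμ hν k t (d - t) (by omega)]
  simp only [cf, eq_ratCast]
  push_cast
  rw [mul_pow (2 * (k : ℂ)) x t]
  obtain ⟨u, hu⟩ := Nat.exists_eq_add_of_le ht
  rw [hu, Nat.add_sub_cancel_left, pow_add]
  field_simp
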